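/- E[ Σ_{e={i,j}∈E(G)} 1_{e∉D}·d̂(i)·d̂(j) ] = p·q²·Σ_{{i,j}∈E(G)} (d(i)−1)·(d(j)−1), where the expectation is over the random deletion set D and 1_{e∉D} is the indicator that edge e is kept. -/

import Mathlib

/-!
By linearity of expectation the claim reduces to one edge `e = s(i, j)`. On the event `e ∉ D`,
`d̂(i)` is the sum of the indicators of `f ∈ D` over the `d(i) - 1` edges `f ≠ e` at `i`, and
likewise for `j`. Since `G` is simple, an edge containing both `i` and `j` equals `e`, so for
`f ∋ i` and `g ∋ j` other than `e` the edges `e`, `f`, `g` are distinct, and the event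
`e ∉ D`, `f ∈ D`, `g ∈ D` has probability `p * q ^ 2` (`sum_powerset_weight_three`). There are
`(d(i) - 1) * (d(j) - 1)` such pairs.
-/

/-- The probability that a random subset `D` of `S`, containing each element independently with
probability `q`, avoids `e` and contains `f` and `g`. -/
lemma sum_powerset_weight_three {α : Type*} [DecidableEq α] (S : Finset α) {p q : ℝ}
    (hpq : p + q = 1) {e f g : α} (he : e ∈ S) (hf : f ∈ S) (hg : g ∈ S)
    (hef : e ≠ f) (heg : e ≠ g) (hfg : f ≠ g) :
    ∑ D ∈ S.powerset, q ^ D.card * p ^ (S.card - D.card) *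
      ((if e ∈ D then (0 : ℝ) else 1) *
        ((if f ∈ D then (1 : ℝ) else 0) * (if g ∈ D then (1 : ℝ) else 0))) = p * q ^ 2 := by
  -- Expand `∏ x ∈ S, (F x + H x)`, where `F` vanishes at `e` and `H` vanishes at `f` and `g`.
  have key := Finset.prod_add (fun x => if x ≠ e then q else 0)
    (fun x => if x ≠ f ∧ x ≠ g then p else 0) S
  have hprod : ∏ x ∈ S, ((if x ≠ e then q else 0) + (if x ≠ f ∧ x ≠ g then p else 0))
      = p * q ^ 2 := by
    rw [← Finset.prod_subset (s₁ := {e, f, g})]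
    · rw [Finset.prod_insert (by simp [hef, heg]), Finset.prod_insert (by simp [hfg]),
        Finset.prod_singleton]
      simp only [ne_eq, not_true_eq_false, hef, heg, hef.symm, heg.symm, not_false_eq_true,
        and_self, and_false, false_and, if_true, if_false]
      ring
    · intro x hx
      simp only [Finset.mem_insert, Finset.mem_singleton] at hx
      rcases hx with rfl | rfl | rfl <;> assumption
    · intro x _ hx
      simp only [Finset.mem_insert, Finset.mem_singleton, not_or] at hx
      simp [hx.1, hx.2.1, hx.2.2]
      linarith
  rw [← hprod, key]
  refine Finset.sum_congr rfl fun D hD => ?_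
  have hDS := Finset.mem_powerset.mp hD
  rw [Finset.prod_ite_zero, Finset.prod_ite_zero, Finset.prod_const, Finset.prod_const,
    Finset.card_sdiff_of_subset hDS]
  have h1 : (∀ x ∈ D, x ≠ e) ↔ e ∉ D :=
    ⟨fun h he' => h e he' rfl, fun h x hx hxe => h (hxe ▸ hx)⟩
  have h2 : (∀ x ∈ S \ D, x ≠ f ∧ x ≠ g) ↔ f ∈ D ∧ g ∈ D := by
    simp only [Finset.mem_sdiff]
    constructor
    · intro h
      constructor
      · by_contra hc
        exact (h f ⟨hf, hc⟩).1 rfl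
      · by_contra hc
        exact (h g ⟨hg, hc⟩).2 rfl
    · rintro ⟨h3, h4⟩ x ⟨_, hx⟩
      exact ⟨fun h => hx (h ▸ h3), fun h => hx (h ▸ h4)⟩
  simp only [h1, h2]
  by_cases a : e ∈ D <;> by_cases b : f ∈ D <;> by_cases c : g ∈ D <;> simp [a, b, c]

/-- Away from the event `e ∈ D`, the number of elements of `D` satisfying `P` is a sum of
indicators over the elements of `S` other than `e` satisfying `P`. -/
lemma card_filter_eq_sum_erase {α : Type*} [DecidableEq α] {S D : Finset α} (hD : D ⊆ S)
    {e : α} (he : e ∉ D) (P : α → Prop) [DecidablePred P] :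
    ((D.filter P).card : ℝ) = ∑ f ∈ (S.filter P).erase e, if f ∈ D then (1 : ℝ) else 0 := by
  rw [Finset.sum_boole]
  congr 2
  ext x
  simp only [Finset.mem_filter, Finset.mem_erase]
  exact ⟨fun h => ⟨⟨fun hxe => he (hxe ▸ h.1), hD h.1, h.2⟩, h.1⟩, fun h => ⟨h.2, h.1.2.2⟩⟩

lemma card_erase_incident {V : Type*} [Fintype V] [DecidableEq V]
    (G : SimpleGraph V) [DecidableRel G.Adj] {e : Sym2 V} (he : e ∈ G.edgeFinset) {i : V}
    (hi : i ∈ e) :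
    ((((G.edgeFinset.filter (fun f => i ∈ f)).erase e).card : ℕ) : ℝ) = (G.degree i : ℝ) - 1 := by
  have hm : e ∈ G.edgeFinset.filter (fun f => i ∈ f) := Finset.mem_filter.mpr ⟨he, hi⟩
  rw [Finset.card_erase_of_mem hm, Nat.cast_pred (Finset.card_pos.mpr ⟨e, hm⟩),
    ← G.incidenceFinset_eq_filter, G.card_incidenceFinset_eq_degree]


/-- Each edge of `G` is deleted independently with probability `q` (kept with
probability `p`), giving the random deletion set `D ⊆ E(G)`; `d̂(v)` counts
deleted edges incident to `v`.  Then
`E[ ∑_{e={i,j}∈E(G)} 1_{e∉D}·d̂(i)·d̂(j) ] = p·q²·∑_{{i,j}∈E(G)} (d(i)−1)(d(j)−1)`. -/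
theorem stmt3 {V : Type*} [Fintype V] [DecidableEq V]
    (G : SimpleGraph V) [DecidableRel G.Adj]
    (p q : ℝ) (hp : 0 ≤ p) (hq : 0 ≤ q) (hpq : p + q = 1) :
    ∑ D ∈ G.edgeFinset.powerset,
        q ^ D.card * p ^ (G.edgeFinset.card - D.card) *
          ∑ e ∈ G.edgeFinset,
            (if e ∈ D then (0 : ℝ) else 1) *
              Sym2.lift ⟨fun i j =>
                ((D.filter (fun e' => i ∈ e')).card : ℝ) *
                  ((D.filter (fun e' => j ∈ e')).card : ℝ), by intros; ring⟩ e
      = p * q ^ 2 *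
          ∑ e ∈ G.edgeFinset,
            Sym2.lift ⟨fun i j => ((G.degree i : ℝ) - 1) * ((G.degree j : ℝ) - 1),
              by intros; ring⟩ e := by
  simp only [Finset.mul_sum]
  rw [Finset.sum_comm]
  refine Finset.sum_congr rfl fun e he => ?_
  induction e using Sym2.ind with | _ i j => ?_
  simp only [Sym2.lift_mk]
  have hij : i ≠ j := (G.mem_edgeFinset.mp he : G.Adj i j).ne
  set A := (G.edgeFinset.filter (fun f => i ∈ f)).erase s(i, j) with hA
  set B := (G.edgeFinset.filter (fun f => j ∈ f)).erase s(i, j) with hB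
  calc
    _ = ∑ D ∈ G.edgeFinset.powerset, ∑ f ∈ A, ∑ g ∈ B,
          q ^ D.card * p ^ (G.edgeFinset.card - D.card) *
            ((if s(i, j) ∈ D then (0 : ℝ) else 1) *
              ((if f ∈ D then (1 : ℝ) else 0) * (if g ∈ D then (1 : ℝ) else 0))) := by
        refine Finset.sum_congr rfl fun D hD => ?_
        by_cases h : s(i, j) ∈ D
        · simp [h]
        · have hDS := Finset.mem_powerset.mp hD
          rw [card_filter_eq_sum_erase hDS h, card_filter_eq_sum_erase hDS h,
            Finset.sum_mul_sum]
          simp only [Finset.mul_sum, hA, hB]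
    _ = ∑ f ∈ A, ∑ g ∈ B, p * q ^ 2 := by
        rw [Finset.sum_comm]
        refine Finset.sum_congr rfl fun f hf => ?_
        rw [Finset.sum_comm]
        refine Finset.sum_congr rfl fun g hg => ?_
        simp only [hA, hB, Finset.mem_erase, Finset.mem_filter] at hf hg
        refine sum_powerset_weight_three _ hpq he hf.2.1 hg.2.1 hf.1.symm hg.1.symm ?_
        rintro rfl
        exact hf.1 ((Sym2.mem_and_mem_iff hij).mp ⟨hf.2.2, hg.2.2⟩)
    _ = _ := by
        rw [← card_erase_incident G he (Sym2.mem_mk_left i j),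
          ← card_erase_incident G he (Sym2.mem_mk_right i j)]
        simp only [Finset.sum_const, nsmul_eq_mul, ← hA, ← hB]
        ring
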